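/- arXiv:1008.0166 — 5 statements merged into one kernel-verified Lean document; each statement's English description precedes it below -/
import Mathlib

section
/- For every k ∈ ℕ, the image of the generator b_k in Y has additive order exactly p^{k+1}; that is, p^{k+1}·b_k = 0 in Y and p^k·b_k ≠ 0 in Y. -/
/-!
The relations give `p ^ k • b_k = v ^ k • b_0`, which `p` kills. For the lower bound, specialise `v`
to `1`: the assignment `b_j ↦ p ^ (-j)` is compatible with `p·b_j = v·b_{j-1}` and sends `p·b_0` to
`p`, so it maps the relations into `p ℤ_p` and induces `Y → ℚ_p / p ℤ_p`. The image of
`p ^ k • b_k` is the class of `1`, which is nonzero. In the proof, membership in `p ℤ_p` is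
expressed as having norm `< 1`.
-/

noncomputable section

/-- `R = ℤ_p[v]`, the polynomial ring over the `p`-adic integers. -/
abbrev R (p : ℕ) [Fact p.Prime] : Type := Polynomial (PadicInt p)

/-- `F = ⊕_{j ∈ ℕ} R·b_j`, the free `R`-module on generators `b_j = single j 1`. -/
abbrev F (p : ℕ) [Fact p.Prime] : Type := ℕ →₀ R p

/-- The relations `p·b_0` and `p·b_j - v·b_{j-1}` for `j ≥ 1`. -/
def rel (p : ℕ) [Fact p.Prime] : ℕ → F p
  | 0 => Finsupp.single 0 (p : R p)
  | (j + 1) => Finsupp.single (j + 1) (p : R p) - Finsupp.single j (Polynomial.X : R p)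

/-- `Y`, the quotient of `F` by the submodule generated by the relations. -/
abbrev Y (p : ℕ) [Fact p.Prime] : Type :=
  F p ⧸ Submodule.span (R p) (Set.range (rel p))

/-- The image of the generator `b_j` in `Y`. -/
def bY (p : ℕ) [Fact p.Prime] (j : ℕ) : Y p :=
  Submodule.Quotient.mk (Finsupp.single j (1 : R p))

theorem p_smul_bY_zero (p : ℕ) [Fact p.Prime] : p • bY p 0 = 0 := by
  rw [bY, ← Submodule.Quotient.mk_smul, Submodule.Quotient.mk_eq_zero]
  have h : p • (Finsupp.single 0 (1 : R p) : F p) = rel p 0 := by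
    simp [rel]
  rw [h]
  exact Submodule.subset_span ⟨0, rfl⟩

theorem p_smul_bY_succ (p : ℕ) [Fact p.Prime] (j : ℕ) :
    p • bY p (j + 1) = (Polynomial.X : R p) • bY p j := by
  rw [bY, bY, ← Submodule.Quotient.mk_smul, ← Submodule.Quotient.mk_smul, Submodule.Quotient.eq]
  have h : p • (Finsupp.single (j + 1) (1 : R p) : F p) -
      (Polynomial.X : R p) • Finsupp.single j (1 : R p) = rel p (j + 1) := by
    simp [rel]
  rw [h]
  exact Submodule.subset_span ⟨j + 1, rfl⟩

theorem pow_smul_bY (p : ℕ) [Fact p.Prime] (k : ℕ) : p ^ (k + 1) • bY p k = 0 := by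
  induction k with
  | zero => simpa using p_smul_bY_zero p
  | succ k ih => rw [pow_succ, mul_smul, p_smul_bY_succ, smul_comm, ih, smul_zero]

/-- The ring homomorphism `ℤ_p[v] → ℚ_p` sending `v` to `1`. -/
def evalOne (p : ℕ) [Fact p.Prime] : R p →+* ℚ_[p] :=
  (algebraMap ℤ_[p] ℚ_[p]).comp (Polynomial.evalRingHom 1)

theorem norm_evalOne_le (p : ℕ) [Fact p.Prime] (r : R p) : ‖evalOne p r‖ ≤ 1 :=
  (Polynomial.eval 1 r).2

/-- The additive map `F → ℚ_p` with `r·b_j ↦ r(1) p ^ (-j)`. -/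
def phi (p : ℕ) [Fact p.Prime] : F p →+ ℚ_[p] :=
  Finsupp.liftAddHom fun j =>
    (AddMonoidHom.mulRight ((p : ℚ_[p])⁻¹ ^ j)).comp (evalOne p).toAddMonoidHom

theorem phi_single (p : ℕ) [Fact p.Prime] (j : ℕ) (r : R p) :
    phi p (Finsupp.single j r) = evalOne p r * (p : ℚ_[p])⁻¹ ^ j := by
  simp [phi]

theorem phi_smul (p : ℕ) [Fact p.Prime] (r : R p) (x : F p) :
    phi p (r • x) = evalOne p r * phi p x := by
  induction x using Finsupp.induction_linear with
  | zero => simp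
  | add x y hx hy => rw [smul_add, map_add, map_add, hx, hy, mul_add]
  | single j s => rw [Finsupp.smul_single, phi_single, phi_single, smul_eq_mul, map_mul, mul_assoc]

/-- `phi` maps the submodule of relations into the maximal ideal of `ℤ_p`. -/
theorem norm_phi_lt_one (p : ℕ) [Fact p.Prime] (x : F p)
    (hx : x ∈ Submodule.span (R p) (Set.range (rel p))) : ‖phi p x‖ < 1 := by
  have hp : (p : ℚ_[p]) ≠ 0 := Nat.cast_ne_zero.mpr (Fact.out : p.Prime).ne_zero
  induction hx using Submodule.span_induction with
  | mem x hx =>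
    obtain ⟨j, rfl⟩ := hx
    cases j with
    | zero =>
      rw [rel, phi_single, map_natCast, pow_zero, mul_one]
      exact Padic.norm_p_lt_one
    | succ j =>
      have hX : evalOne p Polynomial.X = 1 := by simp [evalOne]
      have h : phi p (rel p (j + 1)) = 0 := by
        rw [rel, map_sub, phi_single, phi_single, map_natCast, hX, pow_succ']
        field_simp
        simp
      simp [h]
  | zero => simp
  | add x y _ _ hx hy =>
    rw [map_add]
    exact (Padic.nonarchimedean _ _).trans_lt (max_lt hx hy)
  | smul r x _ hx =>
    rw [phi_smul, norm_mul]
    exact (mul_le_of_le_one_left (norm_nonneg _) (norm_evalOne_le p r)).trans_lt hx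

/-- the image of `b_k` in `Y` has additive order exactly `p^(k+1)`. -/
theorem stmt_2 (p : ℕ) [Fact p.Prime] (k : ℕ) :
    p ^ (k + 1) • bY p k = 0 ∧ p ^ k • bY p k ≠ 0 := by
  refine ⟨pow_smul_bY p k, fun h => ?_⟩
  rw [bY, ← Submodule.Quotient.mk_smul, Submodule.Quotient.mk_eq_zero] at h
  have hp : (p : ℚ_[p]) ≠ 0 := Nat.cast_ne_zero.mpr (Fact.out : p.Prime).ne_zero
  have h1 : phi p (p ^ k • Finsupp.single k (1 : R p)) = 1 := by
    rw [map_nsmul, phi_single, map_one, one_mul, nsmul_eq_mul, Nat.cast_pow, ← mul_pow,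
      mul_inv_cancel₀ hp, one_pow]
  have h2 := norm_phi_lt_one p _ h
  rw [h1, norm_one] at h2
  exact lt_irrefl _ h2
end
end

section
/- Every element of the tensor product Y ⊗_R Y is annihilated by p: for all x ∈ Y ⊗_R Y, p·x = 0. (In particular Y ⊗_R Y is an 𝔽_p-vector space; this is the computation p(v_{2i−1} ⊗ v_{2j−1}) = 0 of Example 2.9.) -/
/-!
By bilinearity it suffices to kill the generators `b_i ⊗ b_j`. Since `p b_0 = 0` and
`p b_{j+1} = v b_j` in `Y`, moving `v` across the tensor product gives
`p (b_{i+1} ⊗ b_j) = v b_i ⊗ b_j = b_i ⊗ v b_j = p (b_i ⊗ b_{j+1})`.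
Thus the left index can be lowered to `0`, where `p b_0 = 0`.
-/

noncomputable section

open TensorProduct

theorem smul_bY_zero (p : ℕ) [Fact p.Prime] : (p : R p) • bY p 0 = 0 := by
  rw [bY, ← Submodule.Quotient.mk_smul, Submodule.Quotient.mk_eq_zero]
  refine Submodule.subset_span ⟨0, ?_⟩
  simp [rel]

theorem smul_bY_succ (p : ℕ) [Fact p.Prime] (j : ℕ) :
    (p : R p) • bY p (j + 1) = (Polynomial.X : R p) • bY p j := by
  rw [bY, bY, ← Submodule.Quotient.mk_smul, ← Submodule.Quotient.mk_smul,
    Submodule.Quotient.eq]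
  refine Submodule.subset_span ⟨j + 1, ?_⟩
  simp [rel]

theorem smul_bY_tmul_bY (p : ℕ) [Fact p.Prime] (i j : ℕ) :
    (p : R p) • (bY p i ⊗ₜ[R p] bY p j) = 0 := by
  induction i generalizing j with
  | zero => rw [TensorProduct.smul_tmul', smul_bY_zero, TensorProduct.zero_tmul]
  | succ i ih =>
    rw [TensorProduct.smul_tmul', smul_bY_succ, TensorProduct.smul_tmul, ← smul_bY_succ,
      TensorProduct.tmul_smul, ih]

theorem span_bY (p : ℕ) [Fact p.Prime] : Submodule.span (R p) (Set.range (bY p)) = ⊤ := by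
  rw [eq_top_iff]
  rintro y -
  obtain ⟨f, rfl⟩ := Submodule.Quotient.mk_surjective _ y
  induction f using Finsupp.induction_linear with
  | zero => exact Submodule.zero_mem _
  | add f g hf hg => exact Submodule.add_mem _ hf hg
  | single j a =>
    have h : (Submodule.Quotient.mk (Finsupp.single j a) : Y p) = a • bY p j := by
      rw [bY, ← Submodule.Quotient.mk_smul, Finsupp.smul_single, smul_eq_mul, mul_one]
    rw [h]
    exact Submodule.smul_mem _ _ (Submodule.subset_span ⟨j, rfl⟩)

/-- every element of `Y ⊗_R Y` is annihilated by `p`. -/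
theorem stmt_4 (p : ℕ) [Fact p.Prime] :
    ∀ x : Y p ⊗[R p] Y p, p • x = 0 := by
  intro x
  rw [← Nat.cast_smul_eq_nsmul (R p)]
  induction x using TensorProduct.induction_on with
  | zero => exact smul_zero _
  | add x y hx hy => rw [smul_add, hx, hy, add_zero]
  | tmul y z =>
    have hy : y ∈ Submodule.span (R p) (Set.range (bY p)) := span_bY p ▸ Submodule.mem_top
    have hz : z ∈ Submodule.span (R p) (Set.range (bY p)) := span_bY p ▸ Submodule.mem_top
    induction hy using Submodule.span_induction with
    | zero => rw [TensorProduct.zero_tmul, smul_zero]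
    | add y y' _ _ h h' => rw [TensorProduct.add_tmul, smul_add, h, h', add_zero]
    | smul a y _ h => rw [← TensorProduct.smul_tmul', smul_comm, h, smul_zero]
    | mem y hy =>
      obtain ⟨i, rfl⟩ := hy
      induction hz using Submodule.span_induction with
      | zero => rw [TensorProduct.tmul_zero, smul_zero]
      | add z z' _ _ h h' => rw [TensorProduct.tmul_add, smul_add, h, h', add_zero]
      | smul a z _ h => rw [TensorProduct.tmul_smul, smul_comm, h, smul_zero]
      | mem z hz =>
        obtain ⟨j, rfl⟩ := hz
        exact smul_bY_tmul_bY p i j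
end
end

section
/- The additive homomorphism ⊕_{t∈ℕ} ℤ/p^{t+1} → ⊕_{j∈ℕ} Y·a_j sending the generator of the t-th summand to z_t = Σ_{s=0}^{t} b_{t−s}·a_s is injective, and its image is exactly the kernel of D. (Hence Tor^1_R(Y, Y) ≅ ⊕_{t∈ℕ} ℤ/p^{t+1} as abelian groups, with the class of z_t of order p^{t+1}; this is the computation T_{i,2m} ≅ ℤ/p^{t+1} of Example 2.9.) -/
/-!
In `Y` one has `v·b_j = p·b_{j+1}` and `p^(j+1)·b_j = 0`, so `Y` is generated by the `b_j` as an
abelian group (`closure_b`), and the coordinate functions `coord` show that `Y` is the direct sum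
of the cyclic groups `ℤ/p^(j+1)·b_j`: the map `psi` is bijective (`psi_injective`,
`psi_surjective`). In these coordinates multiplication by `v` is multiplication by `p` from
`ℤ/p^(j+1)` to `ℤ/p^(j+2)`, which is injective (`eq_zero_of_X_smul`).

An element `x = Σ x_j·a_j` lies in the kernel of `D` if and only if `p·x_j = v·x_{j+1}` for all `j`
(`Dmap_apply`). As `v` is injective on `Y`, such an `x` is determined by `x_0`
(`eq_zero_of_Dmap`). Every `z_t` lies in the kernel (`Dmap_z`) and has coefficient `b_t` at `a_0`,
so `x ↦ x_0` restricts to an isomorphism from the kernel onto `Y` which carries the map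
`φ : ⨁ ℤ/p^(t+1) → ker D` to the bijection `psi`. Hence `φ` is a bijection onto the kernel.
-/

noncomputable section

/-- The `R`-linear map `D : ⊕_j Y·a_j → ⊕_j Y·b_j` obtained by tensoring the resolution
differential with `Y`: `D(y·a_0) = (p·y)·b_0` and `D(y·a_j) = (p·y)·b_j - (v·y)·b_{j-1}`
for `j ≥ 1`. -/
def Dmap (p : ℕ) [Fact p.Prime] : (ℕ →₀ Y p) →ₗ[R p] (ℕ →₀ Y p) :=
  Finsupp.lsum ℕ fun j =>
    match j with
    | 0 => Finsupp.lsingle 0 ∘ₗ LinearMap.lsmul (R p) (Y p) (p : R p)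
    | (j + 1) =>
        Finsupp.lsingle (j + 1) ∘ₗ LinearMap.lsmul (R p) (Y p) (p : R p)
          - Finsupp.lsingle j ∘ₗ LinearMap.lsmul (R p) (Y p) (Polynomial.X : R p)

/-- The element `z_t = Σ_{s=0}^{t} b_{t-s}·a_s` of `⊕_j Y·a_j`. -/
def z (p : ℕ) [Fact p.Prime] (t : ℕ) : ℕ →₀ Y p :=
  ∑ s ∈ Finset.range (t + 1), Finsupp.single s (bY p (t - s))

open DirectSum

/-! ### Homomorphisms out of `⨁ t, ℤ/p^(t+1)` -/

section Lift

variable {A : Type*} [AddCommGroup A]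

/-- The additive map out of `⨁ t, ℤ/p^(t+1)` sending the `t`-th generator to `g t`, where
`g t` is killed by `p^(t+1)`. -/
def dsLift (p : ℕ) (g : ℕ → A) (h : ∀ t, ((p ^ (t + 1) : ℕ) : ℤ) • g t = 0) :
    (⨁ t : ℕ, ZMod (p ^ (t + 1))) →+ A :=
  DirectSum.toAddMonoid fun t =>
    ZMod.lift (p ^ (t + 1)) ⟨zmultiplesHom A (g t), by simpa using h t⟩

lemma dsLift_of_one (p : ℕ) (g : ℕ → A) (h : ∀ t, ((p ^ (t + 1) : ℕ) : ℤ) • g t = 0) (t : ℕ) :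
    dsLift p g h (DirectSum.of (fun t : ℕ => ZMod (p ^ (t + 1))) t 1) = g t := by
  rw [dsLift, DirectSum.toAddMonoid_of]
  have := ZMod.lift_coe (p ^ (t + 1)) ⟨zmultiplesHom A (g t), by simpa using h t⟩ (1 : ℤ)
  rw [Int.cast_one] at this
  rw [this]
  simp

lemma ds_hom_ext (p : ℕ) {f g : (⨁ t : ℕ, ZMod (p ^ (t + 1))) →+ A}
    (h : ∀ t, f (DirectSum.of (fun t : ℕ => ZMod (p ^ (t + 1))) t 1)
      = g (DirectSum.of (fun t : ℕ => ZMod (p ^ (t + 1))) t 1)) : f = g := by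
  refine DirectSum.addHom_ext fun t y => ?_
  obtain ⟨k, rfl⟩ := ZMod.intCast_surjective y
  rw [← zsmul_one k, map_zsmul, map_zsmul, map_zsmul, h]

end Lift

variable {p : ℕ} [Fact p.Prime]

/-! ### The generators of `Y` -/

lemma p_smul_b_zero : (p : R p) • bY p 0 = 0 := by
  have : rel p 0 ∈ Submodule.span (R p) (Set.range (rel p)) := Submodule.subset_span ⟨0, rfl⟩
  rw [← Submodule.Quotient.mk_eq_zero] at this
  rw [← this, bY, ← Submodule.Quotient.mk_smul]
  simp [rel]

lemma p_smul_b_succ (j : ℕ) :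
    (p : R p) • bY p (j + 1) = (Polynomial.X : R p) • bY p j := by
  have : rel p (j + 1) ∈ Submodule.span (R p) (Set.range (rel p)) :=
    Submodule.subset_span ⟨j + 1, rfl⟩
  rw [← Submodule.Quotient.mk_eq_zero] at this
  rw [← sub_eq_zero, ← this, bY, bY, ← Submodule.Quotient.mk_smul, ← Submodule.Quotient.mk_smul,
    ← Submodule.Quotient.mk_sub]
  simp [rel]

lemma p_pow_smul_b (j : ℕ) : (p : R p) ^ (j + 1) • bY p j = 0 := by
  induction j with
  | zero => simpa using p_smul_b_zero
  | succ j ih => rw [pow_succ, mul_smul, p_smul_b_succ, smul_comm, ih, smul_zero]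

lemma p_pow_zsmul_b (j : ℕ) : ((p ^ (j + 1) : ℕ) : ℤ) • bY p j = 0 := by
  rw [← p_pow_smul_b j, ← Nat.cast_pow, natCast_zsmul, Nat.cast_smul_eq_nsmul]

/-- `Y` is generated by the `b_j` already as an abelian group: `v·b_j = p·b_{j+1}`, and a `p`-adic
integer acts on `b_j` through its residue modulo `p^(j+1)`. -/
lemma closure_b : AddSubgroup.closure (Set.range (bY p)) = ⊤ := by
  set S := AddSubgroup.closure (Set.range (bY p)) with hS
  have hb : ∀ j, bY p j ∈ S := fun j => AddSubgroup.subset_closure ⟨j, rfl⟩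
  have hX : ∀ y ∈ S, (Polynomial.X : R p) • y ∈ S := by
    intro y hy
    induction hy using AddSubgroup.closure_induction with
    | mem y hy =>
      obtain ⟨j, rfl⟩ := hy
      rw [← p_smul_b_succ, Nat.cast_smul_eq_nsmul]
      exact S.nsmul_mem (hb _) _
    | zero => simp
    | add x y _ _ hx hy => rw [smul_add]; exact S.add_mem hx hy
    | neg x _ hx => rw [smul_neg]; exact S.neg_mem hx
  have hC : ∀ (a : ℤ_[p]) (j : ℕ), (Polynomial.C a : R p) • bY p j ∈ S := by
    intro a j
    obtain ⟨n, hn⟩ : ∃ n : ℕ, a - n ∈ Ideal.span {(p : ℤ_[p]) ^ (j + 1)} :=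
      ⟨a.appr (j + 1), PadicInt.appr_spec _ _⟩
    obtain ⟨c, hc⟩ := Ideal.mem_span_singleton'.1 hn
    have : a = c * (p : ℤ_[p]) ^ (j + 1) + n := by rw [hc]; ring
    rw [this, Polynomial.C_add, Polynomial.C_mul, Polynomial.C_pow, add_smul, mul_smul]
    simp only [map_natCast]
    rw [p_pow_smul_b, smul_zero, zero_add, Nat.cast_smul_eq_nsmul]
    exact S.nsmul_mem (hb _) _
  have hR : ∀ (r : R p) (j : ℕ), r • bY p j ∈ S := by
    intro r j
    induction r using Polynomial.induction_on with
    | C a => exact hC a j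
    | add r s hr hs => rw [add_smul]; exact S.add_mem hr hs
    | monomial n a h =>
      rw [pow_succ, ← mul_assoc, mul_comm, mul_smul]
      exact hX _ h
  rw [eq_top_iff]
  rintro y -
  obtain ⟨f, rfl⟩ := Submodule.Quotient.mk_surjective _ y
  induction f using Finsupp.induction_linear with
  | zero => simp
  | add f g hf hg => rw [Submodule.Quotient.mk_add]; exact S.add_mem hf hg
  | single j r =>
    have : (Submodule.Quotient.mk (Finsupp.single j r) : Y p) = r • bY p j := by
      rw [bY, ← Submodule.Quotient.mk_smul]; simp
    rw [this]
    exact hR r j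

/-! ### Coordinates on `Y` -/

/-- The `i`-th coordinate on `F`, with values in `ℤ_p`: it sends `v^n·b_j` to `p^n` if
`j + n = i`, and to `0` otherwise, in accordance with the identity `v^n·b_j = p^n·b_{j+n}`
in `Y`. -/
def coordF (p : ℕ) [Fact p.Prime] (i : ℕ) : F p →+ ℤ_[p] where
  toFun f := ∑ jn ∈ Finset.HasAntidiagonal.antidiagonal i, (p : ℤ_[p]) ^ jn.2 * (f jn.1).coeff jn.2
  map_zero' := by simp
  map_add' f g := by simp [mul_add, Finset.sum_add_distrib]

lemma coordF_apply (i : ℕ) (f : F p) : coordF p i f =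
    ∑ jn ∈ Finset.HasAntidiagonal.antidiagonal i, (p : ℤ_[p]) ^ jn.2 * (f jn.1).coeff jn.2 := rfl

lemma coordF_X_smul_zero (f : F p) : coordF p 0 ((Polynomial.X : R p) • f) = 0 := by
  simp [coordF_apply]

lemma coordF_X_smul_succ (i : ℕ) (f : F p) :
    coordF p (i + 1) ((Polynomial.X : R p) • f) = p * coordF p i f := by
  rw [coordF_apply, coordF_apply, Finset.Nat.sum_antidiagonal_succ', Finset.mul_sum]
  simp [Polynomial.coeff_X_mul, pow_succ', mul_assoc]

lemma coordF_single (i j : ℕ) (r : R p) : coordF p i (Finsupp.single j r) =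
    if j ≤ i then (p : ℤ_[p]) ^ (i - j) * r.coeff (i - j) else 0 := by
  rw [coordF_apply]
  split_ifs with h
  · rw [Finset.sum_eq_single (j, i - j)]
    · simp
    · rintro ⟨a, b⟩ hab hne
      have hab' : a + b = i := by simpa using hab
      have : j ≠ a := by
        rintro rfl
        exact hne (by simp; omega)
      simp [this]
    · intro h'
      exact absurd (by simp; omega) h'
  · refine Finset.sum_eq_zero ?_
    rintro ⟨a, b⟩ hab
    have hab' : a + b = i := by simpa using hab
    have : j ≠ a := by omega
    simp [this]

lemma coordF_rel (i j : ℕ) (r : R p) : (p : ℤ_[p]) ^ (i + 1) ∣ coordF p i (r • rel p j) := by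
  cases j with
  | zero =>
    rw [rel, Finsupp.smul_single, smul_eq_mul, coordF_single, if_pos (Nat.zero_le _),
      Polynomial.coeff_mul_natCast]
    exact ⟨r.coeff i, by simp; ring⟩
  | succ j =>
    rw [rel, smul_sub, map_sub, Finsupp.smul_single, smul_eq_mul, Finsupp.smul_single,
      smul_eq_mul, coordF_single, coordF_single, Polynomial.coeff_mul_natCast]
    rcases lt_trichotomy i j with h | rfl | h
    · rw [if_neg (by omega), if_neg (by omega)]; simp
    · simp
    · obtain ⟨k, rfl⟩ : ∃ k, i = j + 1 + k := ⟨i - (j + 1), by omega⟩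
      rw [if_pos (by omega), if_pos (by omega), show j + 1 + k - (j + 1) = k by omega,
        show j + 1 + k - j = k + 1 by omega, Polynomial.coeff_mul_X]
      exact ⟨0, by ring⟩

/-- The `i`-th coordinate on `F`, reduced modulo `p^(i+1)`, descends to `Y`. -/
lemma coordF_mem_span (i : ℕ) {f : F p}
    (hf : f ∈ Submodule.span (R p) (Set.range (rel p))) : (p : ℤ_[p]) ^ (i + 1) ∣ coordF p i f := by
  induction hf using Submodule.closure_induction with
  | zero => simp
  | add x y _ _ hx hy => rw [map_add]; exact dvd_add hx hy
  | smul_mem r x hx =>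
    obtain ⟨j, rfl⟩ := hx
    exact coordF_rel i j r

lemma toZModPow_eq_zero_iff (n : ℕ) (a : ℤ_[p]) :
    PadicInt.toZModPow n a = 0 ↔ (p : ℤ_[p]) ^ n ∣ a := by
  rw [← RingHom.mem_ker, PadicInt.ker_toZModPow, Ideal.mem_span_singleton]

/-- The `i`-th coordinate `Y → ℤ/p^(i+1)`. -/
def coord (p : ℕ) [Fact p.Prime] (i : ℕ) : Y p →+ ZMod (p ^ (i + 1)) :=
  QuotientAddGroup.lift (Submodule.span (R p) (Set.range (rel p))).toAddSubgroup
    ((PadicInt.toZModPow (i + 1)).toAddMonoidHom.comp (coordF p i))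
    fun _ hf => (toZModPow_eq_zero_iff _ _).2 (coordF_mem_span i hf)

lemma coord_mk (i : ℕ) (f : F p) :
    coord p i (Submodule.Quotient.mk f) = PadicInt.toZModPow (i + 1) (coordF p i f) := rfl

lemma coord_b (i j : ℕ) : coord p i (bY p j) = if j = i then 1 else 0 := by
  rw [bY, coord_mk, coordF_single, Polynomial.coeff_one]
  rcases lt_trichotomy i j with h | rfl | h
  · rw [if_neg (by omega), if_neg (by omega), map_zero]
  · simp
  · rw [if_pos h.le, if_neg (by omega), if_neg (by omega), mul_zero, map_zero]

/-- The additive map `⨁ j, ℤ/p^(j+1) → Y` sending the `j`-th generator to `b_j`. -/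
def psi (p : ℕ) [Fact p.Prime] : (⨁ t : ℕ, ZMod (p ^ (t + 1))) →+ Y p :=
  dsLift p (bY p) p_pow_zsmul_b

lemma psi_surjective : Function.Surjective (psi p) := by
  rw [← AddMonoidHom.range_eq_top, eq_top_iff, ← closure_b, AddSubgroup.closure_le]
  rintro _ ⟨j, rfl⟩
  exact ⟨_, dsLift_of_one p _ _ j⟩

lemma coord_psi (i : ℕ) (w : ⨁ t : ℕ, ZMod (p ^ (t + 1))) : coord p i (psi p w) = w i := by
  have : (coord p i).comp (psi p) =
      DFinsupp.evalAddMonoidHom (β := fun t : ℕ => ZMod (p ^ (t + 1))) i := by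
    refine ds_hom_ext p fun t => ?_
    rw [AddMonoidHom.comp_apply, psi, dsLift_of_one, coord_b]
    change _ = (DirectSum.of (fun t : ℕ => ZMod (p ^ (t + 1))) t 1) i
    split_ifs with h
    · subst h
      rw [DirectSum.of_eq_same]
    · rw [DirectSum.of_eq_of_ne _ _ _ (Ne.symm h)]
  exact DFunLike.congr_fun this w

lemma psi_injective : Function.Injective (psi p) := by
  intro w w' h
  refine DFinsupp.ext fun i => ?_
  rw [← coord_psi, ← coord_psi, h]

lemma eq_zero_of_coord {y : Y p} (h : ∀ i, coord p i y = 0) : y = 0 := by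
  obtain ⟨w, rfl⟩ := psi_surjective y
  have : w = 0 := DFinsupp.ext fun i => by rw [← coord_psi, h]; rfl
  rw [this, map_zero]

/-- Multiplication by `v` is injective on `Y`, being multiplication by `p` from `ℤ/p^(i+1)` to
`ℤ/p^(i+2)` in coordinates. -/
lemma eq_zero_of_X_smul {y : Y p} (h : (Polynomial.X : R p) • y = 0) : y = 0 := by
  refine eq_zero_of_coord fun i => ?_
  obtain ⟨f, rfl⟩ := Submodule.Quotient.mk_surjective _ y
  have h1 : coord p (i + 1) (Submodule.Quotient.mk ((Polynomial.X : R p) • f)) = 0 := by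
    rw [Submodule.Quotient.mk_smul, h, map_zero]
  rw [coord_mk, coordF_X_smul_succ, toZModPow_eq_zero_iff, pow_succ'] at h1
  have hp : (p : ℤ_[p]) ≠ 0 := Nat.cast_ne_zero.2 (Fact.out : p.Prime).ne_zero
  rw [coord_mk, toZModPow_eq_zero_iff]
  exact (mul_dvd_mul_iff_left hp).1 h1

/-! ### The kernel of `D` -/

lemma Dmap_apply (x : ℕ →₀ Y p) (j : ℕ) :
    Dmap p x j = (p : R p) • x j - (Polynomial.X : R p) • x (j + 1) := by
  induction x using Finsupp.induction_linear with
  | zero => simp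
  | add x y hx hy => simp only [map_add, Finsupp.add_apply, hx, hy, smul_add]; abel
  | single k y =>
    rw [Dmap, Finsupp.lsum_single]
    cases k with
    | zero => by_cases h : j = 0 <;> simp [h, eq_comm]
    | succ k =>
      by_cases h : j = k
      · subst h; simp
      · by_cases h' : j = k + 1
        · subst h'; simp
        · simp [Ne.symm h, Ne.symm h']

lemma z_apply (t s : ℕ) : z p t s = if s ≤ t then bY p (t - s) else 0 := by
  rw [z, Finsupp.finsetSum_apply]
  simp [Finsupp.single_apply]

lemma Dmap_z (t : ℕ) : Dmap p (z p t) = 0 := by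
  ext1 j
  rw [Dmap_apply, z_apply, z_apply, Finsupp.zero_apply]
  rcases lt_trichotomy j t with h | rfl | h
  · obtain ⟨k, rfl⟩ : ∃ k, t = j + 1 + k := ⟨t - (j + 1), by omega⟩
    rw [if_pos (by omega), if_pos (by omega), show j + 1 + k - j = k + 1 by omega,
      show j + 1 + k - (j + 1) = k by omega, p_smul_b_succ, sub_self]
  · simpa using p_smul_b_zero
  · rw [if_neg (by omega), if_neg (by omega)]; simp

lemma p_pow_zsmul_z (t : ℕ) : ((p ^ (t + 1) : ℕ) : ℤ) • z p t = 0 := by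
  ext1 s
  rw [Finsupp.smul_apply, z_apply, Finsupp.zero_apply]
  split_ifs with h
  · obtain ⟨k, rfl⟩ : ∃ k, t = s + k := ⟨t - s, by omega⟩
    rw [show s + k - s = k by omega, show s + k + 1 = s + (k + 1) by omega, pow_add, Nat.cast_mul,
      mul_smul, p_pow_zsmul_b, smul_zero]
  · simp

/-- An element of the kernel of `D` is determined by its coefficient at `a_0`. -/
lemma eq_zero_of_Dmap {x : ℕ →₀ Y p} (hx : Dmap p x = 0) (h0 : x 0 = 0) : x = 0 := by
  ext1 j
  induction j with
  | zero => exact h0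
  | succ j ih =>
    have h := Dmap_apply x j
    rw [hx, ih, Finsupp.zero_apply, smul_zero, zero_sub, eq_comm,
      neg_eq_zero] at h
    exact eq_zero_of_X_smul h

/-- the additive map `⊕_{t ∈ ℕ} ℤ/p^(t+1) → ⊕_j Y·a_j` sending the generator
of the `t`-th summand to `z_t` is injective with image exactly the kernel of `D`;
hence `Tor¹_R(Y, Y) ≅ ⊕_t ℤ/p^(t+1)` as abelian groups. -/
theorem stmt_8 (p : ℕ) [Fact p.Prime] :
    ∃ φ : (⨁ t : ℕ, ZMod (p ^ (t + 1))) →+ (ℕ →₀ Y p),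
      (∀ t : ℕ, φ (DirectSum.of (fun t : ℕ => ZMod (p ^ (t + 1))) t 1) = z p t) ∧
      Function.Injective φ ∧
      (∀ x : ℕ →₀ Y p, x ∈ Set.range φ ↔ Dmap p x = 0) := by
  let φ := dsLift p (z p) p_pow_zsmul_z
  -- Taking the coefficient at `a_0` turns `z_t` into `b_t`, hence `φ` into `psi`.
  have hφ0 : ∀ w, φ w 0 = psi p w := by
    have : (Finsupp.applyAddHom 0).comp φ = psi p := by
      refine ds_hom_ext p fun t => ?_
      rw [AddMonoidHom.comp_apply, psi, dsLift_of_one, dsLift_of_one]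
      simp [z_apply]
    exact fun w => DFunLike.congr_fun this w
  have hφD : ∀ w, Dmap p (φ w) = 0 := by
    have : (Dmap p).toAddMonoidHom.comp φ = 0 := by
      refine ds_hom_ext p fun t => ?_
      rw [AddMonoidHom.comp_apply, dsLift_of_one]
      exact Dmap_z t
    exact fun w => DFunLike.congr_fun this w
  refine ⟨φ, dsLift_of_one p _ _, fun w w' h => psi_injective ?_, fun x => ⟨?_, fun hx => ?_⟩⟩
  · rw [← hφ0, ← hφ0, h]
  · rintro ⟨w, rfl⟩
    exact hφD w
  · obtain ⟨w, hw⟩ := psi_surjective (x 0)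
    refine ⟨w, (sub_eq_zero.1 (eq_zero_of_Dmap (x := x - φ w) ?_ ?_)).symm⟩
    · rw [map_sub, hx, hφD, sub_zero]
    · rw [Finsupp.sub_apply, hφ0, hw, sub_self]
end
end

section
/- For every integer i ≥ 2, the 𝔽₂-dimension of the quotient vector space H^{2i} / ( Sq¹(H^{2i−1}) + Sq²(H^{2i−2}) ) equals (i−1)/2 if i is odd and 1 + i/2 if i is even. (Since the algebra 𝓑 is generated by Sq¹ and Sq², this quotient is dual to Hom_𝓑(H^{2i}(ℝP^∞ ∧ ℝP^∞; ℤ/2), ℤ/2), so this is Proposition 3.5(ii) of the paper.) -/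
/-! The monomials `x^a y^b` with `a, b ≥ 1` and `a + b = 2i` form a basis of `H^{2i}`. As `Sq¹` of a
monomial of odd degree `2i - 1` has exactly one nonzero term, `Sq¹(H^{2i-1})` is spanned by the
monomials with both exponents even (`mono_even_mem`). Modulo these, writing `e_c` for the class of
`x^{2c+1} y^{2i-2c-1}` (`0 ≤ c < i`), the formula for `Sq²` and `C(2c+1, 2) ≡ c mod 2` leave exactly
the relations `c·e_{c+1} + d·e_c = 0` for `c + d = i - 2` (`mono_odd_rel`).

* If `i = 2j + 1`, then `c` and `d` have opposite parities, and the relations say `e_c = 0` for all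
  even `c`; the `j` classes `e_c` with `c` odd form a basis.
* If `i = 2j`, then `c` and `d` have the same parity, and the relations say `e_c = e_{c+1}` for odd
  `c ≤ i - 3`; the classes are grouped as `{e_0}, {e_1, e_2}, …, {e_{i-1}}`, which gives `j + 1`
  basis elements.

In both cases the linear map `classMap`, sending a monomial to the indicator of its group, realises
the quotient; `finrank_of_classes` reduces the count to the combinatorics of the grouping. -/

noncomputable section

open MvPolynomial

/-- `P = 𝔽₂[x,y]`, with `x = X 0` and `y = X 1`. -/
abbrev P : Type := MvPolynomial (Fin 2) (ZMod 2)

/-- `Sq¹ : P → P`, the `𝔽₂`-linear derivation with `Sq¹(x) = x²` and `Sq¹(y) = y²`. -/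
def Sq1 : P →ₗ[ZMod 2] P :=
  (MvPolynomial.mkDerivation (ZMod 2) (fun i : Fin 2 => (X i : P) ^ 2)).toLinearMap

/-- The value of `Sq²` on the monomial `x^a y^b`, namely
`C(a,2)·x^{a+2}y^b + a·b·x^{a+1}y^{b+1} + C(b,2)·x^a y^{b+2}` (coefficients mod 2). -/
def sq2Monomial (d : Fin 2 →₀ ℕ) : P :=
  monomial (d + Finsupp.single 0 2) (((d 0).choose 2 : ZMod 2))
    + monomial (d + Finsupp.single 0 1 + Finsupp.single 1 1) ((d 0 * d 1 : ℕ) : ZMod 2)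
    + monomial (d + Finsupp.single 1 2) (((d 1).choose 2 : ZMod 2))

/-- `Sq² : P → P`, the `𝔽₂`-linear map determined on monomials by `sq2Monomial`. -/
def Sq2 : P →ₗ[ZMod 2] P :=
  (MvPolynomial.basisMonomials (Fin 2) (ZMod 2)).constr (ZMod 2) sq2Monomial

/-- `Q₁ = Sq¹∘Sq² + Sq²∘Sq¹`. -/
def Q1 : P →ₗ[ZMod 2] P := Sq1 ∘ₗ Sq2 + Sq2 ∘ₗ Sq1

/-- `H^n`, the degree-`n` homogeneous component of the ideal generated by `xy`,
i.e. the reduced cohomology `H̃^n(ℝP^∞ ∧ ℝP^∞; ℤ/2)`. -/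
def H (n : ℕ) : Submodule (ZMod 2) P :=
  (Ideal.span {(X 0 * X 1 : P)}).restrictScalars (ZMod 2)
    ⊓ homogeneousSubmodule (Fin 2) (ZMod 2) n


/-! ### The squares on monomials -/

/-- The monomial `x^a y^b`. -/
def mono (a b : ℕ) : P := monomial (Finsupp.single 0 a + Finsupp.single 1 b) 1

lemma mono_of_finsupp (d : Fin 2 →₀ ℕ) : monomial d (1 : ZMod 2) = mono (d 0) (d 1) := by
  refine congrArg (fun e => monomial e (1 : ZMod 2)) (Finsupp.ext fun i => ?_)
  fin_cases i <;> simp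

lemma monomial_eq_smul_mono (d : Fin 2 →₀ ℕ) (c : ZMod 2) :
    monomial d c = c • mono (d 0) (d 1) := by
  rw [← mono_of_finsupp, smul_monomial, smul_eq_mul, mul_one]

lemma Sq1_mono (a b : ℕ) :
    Sq1 (mono a b) = (a : ZMod 2) • mono (a + 1) b + (b : ZMod 2) • mono a (b + 1) := by
  have hg : ∀ a b, mono a b = X 0 ^ a * X 1 ^ b := by
    intro a b
    simp only [mono, X_pow_eq_monomial, monomial_mul, mul_one]
  simp only [hg]
  simp only [Sq1, Derivation.coeFn_coe, Derivation.leibniz, Derivation.leibniz_pow,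
    mkDerivation_X, smul_eq_mul, Algebra.smul_def, map_natCast]
  rcases a with _ | a <;> rcases b with _ | b <;> simp [-mul_eq_mul_left_iff] <;> ring

lemma Sq2_mono (a b : ℕ) :
    Sq2 (mono a b) = (a.choose 2 : ZMod 2) • mono (a + 2) b
      + ((a * b : ℕ) : ZMod 2) • mono (a + 1) (b + 1)
      + (b.choose 2 : ZMod 2) • mono a (b + 2) := by
  have h : mono a b = basisMonomials (Fin 2) (ZMod 2)
      (Finsupp.single 0 a + Finsupp.single 1 b) := by
    simp [mono]
  rw [h, Sq2, Module.Basis.constr_basis, sq2Monomial]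
  simp only [monomial_eq_smul_mono]
  simp

lemma choose_two_cast (a : ℕ) : (a.choose 2 : ZMod 2) = ((a / 2 : ℕ) : ZMod 2) := by
  induction a using Nat.twoStepInduction with
  | zero => simp
  | one => simp
  | more a ih _ =>
    have h1 : (a + 2).choose 2 = a.choose 2 + 2 * a + 1 := by
      simp [Nat.choose_succ_succ' (a + 1) 1, Nat.choose_succ_succ' a 1]; ring
    have h2 : (a + 2) / 2 = a / 2 + 1 := by omega
    have h3 : (2 : ZMod 2) = 0 := rfl
    rw [h1, h2]
    push_cast
    rw [ih, h3]; ring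

lemma even_cast {a : ℕ} (h : a % 2 = 0) : (a : ZMod 2) = 0 :=
  (ZMod.natCast_eq_zero_iff a 2).2 (Nat.dvd_of_mod_eq_zero h)

lemma odd_cast {a : ℕ} (h : a % 2 = 1) : (a : ZMod 2) = 1 := by
  rw [← ZMod.natCast_mod, h, Nat.cast_one]

/-- On `x^{2c+1} y^{2d+1}` the outer coefficients of `Sq²` are `c` and `d` mod 2. -/
lemma Sq2_mono_odd (c d : ℕ) :
    Sq2 (mono (2 * c + 1) (2 * d + 1)) = (c : ZMod 2) • mono (2 * c + 3) (2 * d + 1)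
      + mono (2 * c + 2) (2 * d + 2) + (d : ZMod 2) • mono (2 * c + 1) (2 * d + 3) := by
  rw [Sq2_mono, choose_two_cast, choose_two_cast,
    odd_cast (a := (2 * c + 1) * (2 * d + 1)) (by simp [Nat.mul_mod, Nat.add_mod]), one_smul,
    show (2 * c + 1) / 2 = c by omega, show (2 * d + 1) / 2 = d by omega]

/-! ### The monomial basis of `H^n` and the relations -/

lemma H_eq_span (n : ℕ) : H n = Submodule.span (ZMod 2)
    {p | ∃ a b, 0 < a ∧ 0 < b ∧ a + b = n ∧ p = mono a b} := by
  have hX : (X 0 * X 1 : P) = mono 1 1 := by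
    simp only [mono, X, monomial_mul, mul_one]
  apply le_antisymm
  · rintro p ⟨hp, hn⟩
    have hp' : p ∈ Ideal.span ((fun s => monomial s (1 : ZMod 2)) ''
        {(Finsupp.single 0 1 + Finsupp.single 1 1 : Fin 2 →₀ ℕ)}) := by
      simpa [hX, mono] using hp
    rw [mem_ideal_span_monomial_image] at hp'
    rw [p.as_sum]
    refine Submodule.sum_mem _ fun d hd => ?_
    rw [monomial_eq_smul_mono]
    refine Submodule.smul_mem _ _ (Submodule.subset_span ⟨d 0, d 1, ?_, ?_, ?_, rfl⟩)
    · obtain ⟨s, hs, hsd⟩ := hp' d hd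
      rw [Set.mem_singleton_iff] at hs
      subst hs
      simpa [Nat.one_le_iff_ne_zero, Nat.pos_iff_ne_zero] using hsd 0
    · obtain ⟨s, hs, hsd⟩ := hp' d hd
      rw [Set.mem_singleton_iff] at hs
      subst hs
      simpa [Nat.one_le_iff_ne_zero, Nat.pos_iff_ne_zero] using hsd 1
    · have := hn (mem_support_iff.1 hd)
      rw [Finsupp.weight_apply, Finsupp.sum_fintype _ _ (by simp)] at this
      simpa using this
  · rw [Submodule.span_le]
    rintro _ ⟨a, b, ha, hb, hab, rfl⟩
    refine ⟨?_, ?_⟩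
    · change mono a b ∈ Ideal.span {(X 0 * X 1 : P)}
      rw [hX, Ideal.mem_span_singleton]
      obtain ⟨a, rfl⟩ : ∃ a', a = a' + 1 := ⟨a - 1, by omega⟩
      obtain ⟨b, rfl⟩ : ∃ b', b = b' + 1 := ⟨b - 1, by omega⟩
      refine ⟨mono a b, ?_⟩
      simp only [mono, monomial_mul, mul_one]
      refine congrArg (fun e => monomial e (1 : ZMod 2)) (Finsupp.ext fun i => ?_)
      fin_cases i <;> simp [add_comm]
    · refine isHomogeneous_monomial _ ?_
      rw [map_add, Finsupp.degree_single, Finsupp.degree_single, hab]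

lemma mono_mem_H {a b n : ℕ} (ha : 0 < a) (hb : 0 < b) (hab : a + b = n) : mono a b ∈ H n := by
  rw [H_eq_span]
  exact Submodule.subset_span ⟨a, b, ha, hb, hab, rfl⟩

/-- `Sq¹(H^{n-1}) + Sq²(H^{n-2})`. -/
abbrev N (n : ℕ) : Submodule (ZMod 2) P :=
  Submodule.map Sq1 (H (n - 1)) ⊔ Submodule.map Sq2 (H (n - 2))

lemma mono_even_mem {a b n : ℕ} (ha : 0 < a) (hb : 0 < b) (ha2 : a % 2 = 0) (hb2 : b % 2 = 0)
    (hn : a + b = n) : mono a b ∈ N n := by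
  refine Submodule.mem_sup_left ⟨mono (a - 1) b, mono_mem_H (by omega) hb (by omega), ?_⟩
  rw [Sq1_mono, odd_cast (a := a - 1) (by omega), even_cast hb2, one_smul, zero_smul, add_zero,
    Nat.sub_add_cancel ha]

lemma mono_odd_rel {c d n : ℕ} (hn : 2 * c + 2 * d + 4 = n) :
    (c : ZMod 2) • mono (2 * c + 3) (2 * d + 1) + (d : ZMod 2) • mono (2 * c + 1) (2 * d + 3)
      ∈ N n := by
  have h1 : Sq2 (mono (2 * c + 1) (2 * d + 1)) ∈ N n :=
    Submodule.mem_sup_right ⟨_, mono_mem_H (by omega) (by omega) (by omega), rfl⟩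
  have h2 : mono (2 * c + 2) (2 * d + 2) ∈ N n :=
    mono_even_mem (by omega) (by omega) (by omega) (by omega) (by omega)
  convert sub_mem h1 h2 using 1
  rw [Sq2_mono_odd]
  abel

/-! ### Quotients described by groupings of monomials -/

/-- The linear map sending `x^a y^b` to the vector whose `t`-th entry is `1` exactly when `K a t`,
read as "the monomial with `x`-exponent `a` belongs to group `t`". -/
def classMap (K : ℕ → ℕ → Prop) [∀ a t, Decidable (K a t)] (k : ℕ) :
    P →ₗ[ZMod 2] (Fin k → ZMod 2) :=
  (basisMonomials (Fin 2) (ZMod 2)).constr (ZMod 2) fun d t => if K (d 0) t then 1 else 0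

lemma classMap_mono (K : ℕ → ℕ → Prop) [∀ a t, Decidable (K a t)] (k a b : ℕ) :
    classMap K k (mono a b) = fun t : Fin k => if K a t then 1 else 0 := by
  have h : mono a b = basisMonomials (Fin 2) (ZMod 2)
      (Finsupp.single 0 a + Finsupp.single 1 b) := by
    simp [mono]
  rw [h, classMap, Module.Basis.constr_basis]
  simp

/-- Suppose only odd exponents are grouped, and the grouping respects the relations coming from
`Sq²`. Then `classMap` vanishes on the image of `Sq¹` and `Sq²`. -/
lemma classMap_eq_zero (K : ℕ → ℕ → Prop) [∀ a t, Decidable (K a t)] (k i : ℕ)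
    (hodd : ∀ a t, K a t → a % 2 = 1)
    (hrel : ∀ c d t, t < k → c + d + 2 = i →
      (c : ZMod 2) * (if K (2 * c + 3) t then 1 else 0)
        + (d : ZMod 2) * (if K (2 * c + 1) t then 1 else 0) = 0)
    (p : P) (hp : p ∈ N (2 * i)) : classMap K k p = 0 := by
  have heven : ∀ a b, a % 2 = 0 → classMap K k (mono a b) = 0 := by
    intro a b ha
    rw [classMap_mono]
    funext t
    exact if_neg fun h => by have := hodd _ _ h; omega
  suffices h : N (2 * i) ≤ LinearMap.ker (classMap K k) from h hp
  refine sup_le ?_ ?_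
  · rw [Submodule.map_le_iff_le_comap, H_eq_span, Submodule.span_le]
    rintro _ ⟨a, b, ha, hb, hab, rfl⟩
    change classMap K k (Sq1 (mono a b)) = 0
    rw [Sq1_mono, map_add, map_smul, map_smul]
    rcases Nat.mod_two_eq_zero_or_one a with h | h
    · rw [even_cast h, heven a _ h]; simp
    · rw [even_cast (a := b) (by omega), heven (a + 1) _ (by omega)]; simp
  · rw [Submodule.map_le_iff_le_comap, H_eq_span, Submodule.span_le]
    rintro _ ⟨a, b, ha, hb, hab, rfl⟩
    change classMap K k (Sq2 (mono a b)) = 0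
    rcases Nat.mod_two_eq_zero_or_one a with h | h
    · rw [Sq2_mono, map_add, map_add, map_smul, map_smul, map_smul,
        even_cast (a := a * b) (by simp [Nat.mul_mod, h]), heven a _ h, heven (a + 2) _ (by omega)]
      simp
    · obtain ⟨c, rfl⟩ : ∃ c, a = 2 * c + 1 := ⟨a / 2, by omega⟩
      obtain ⟨d, rfl⟩ : ∃ d, b = 2 * d + 1 := ⟨b / 2, by omega⟩
      rw [Sq2_mono_odd, map_add, map_add, map_smul, map_smul, heven (2 * c + 2) _ (by omega),
        add_zero,
        classMap_mono, classMap_mono]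
      funext t
      simpa using hrel c d t t.2 (by omega)

/-- If each group `t < k` has a representative `r t`, and modulo `N n` every monomial either vanishes
and lies in no group, or agrees with the representative of its unique group, then `classMap`
identifies the quotient with `𝔽₂^k`. -/
lemma finrank_of_classes (K : ℕ → ℕ → Prop) [∀ a t, Decidable (K a t)] (k n : ℕ) (r : ℕ → ℕ)
    (hr : ∀ t, t < k → 0 < r t ∧ r t < n)
    (hK : ∀ s t, s < k → t < k → (K (r s) t ↔ t = s))
    (hN : ∀ p ∈ N n, classMap K k p = 0)
    (h : ∀ a b, 0 < a → 0 < b → a + b = n →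
      ((∀ t, t < k → ¬ K a t) ∧ mono a b ∈ N n) ∨
      ∃ t, t < k ∧ (∀ s, s < k → (K a s ↔ s = t)) ∧ mono a b - mono (r t) (n - r t) ∈ N n) :
    Module.finrank (ZMod 2) (↥(H n) ⧸ Submodule.comap (H n).subtype (N n)) = k := by
  -- The section of `classMap` given by the representatives.
  let g : (Fin k → ZMod 2) →ₗ[ZMod 2] P :=
    (Pi.basisFun (ZMod 2) (Fin k)).constr (ZMod 2) fun t => mono (r t) (n - r t)
  have hg : ∀ t, g (Pi.single t 1) = mono (r t) (n - r t) := by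
    intro t
    rw [← Pi.basisFun_apply, Module.Basis.constr_basis]
  have hgH : ∀ v, g v ∈ H n := by
    intro v
    rw [Module.Basis.constr_apply_fintype]
    refine Submodule.sum_mem _ fun t _ => Submodule.smul_mem _ _ ?_
    have := hr t t.2
    exact mono_mem_H (by omega) (by omega) (by omega)
  have hind : ∀ (a : ℕ) (t : Fin k), (∀ s, s < k → (K a s ↔ s = t)) →
      (fun s : Fin k => if K a s then (1 : ZMod 2) else 0) = Pi.single t 1 := by
    intro a t hat
    funext s
    simp [hat s s.2, Pi.single_apply, Fin.ext_iff]
  have hfg : classMap K k ∘ₗ g = LinearMap.id := by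
    refine (Pi.basisFun (ZMod 2) (Fin k)).ext fun t => ?_
    rw [Pi.basisFun_apply, LinearMap.comp_apply, hg, classMap_mono,
      hind _ t fun s hs => hK t s t.2 hs, LinearMap.id_apply]
  have hgf : ∀ p ∈ H n, p - g (classMap K k p) ∈ N n := by
    suffices hle : H n ≤ (N n).comap (LinearMap.id - g ∘ₗ classMap K k) from fun p hp => hle hp
    rw [H_eq_span, Submodule.span_le]
    rintro _ ⟨a, b, ha, hb, hab, rfl⟩
    change mono a b - g (classMap K k (mono a b)) ∈ N n
    rw [classMap_mono]
    rcases h a b ha hb hab with ⟨h0, hm⟩ | ⟨t, ht, hat, hm⟩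
    · have : (fun s : Fin k => if K a s then (1 : ZMod 2) else 0) = 0 := by
        funext s
        exact if_neg (h0 s s.2)
      rwa [this, map_zero, sub_zero]
    · rwa [hind a ⟨t, ht⟩ hat, hg]
  let f : H n →ₗ[ZMod 2] (Fin k → ZMod 2) := classMap K k ∘ₗ (H n).subtype
  have hsurj : Function.Surjective f := fun v => ⟨⟨g v, hgH v⟩, LinearMap.congr_fun hfg v⟩
  have hker : Submodule.comap (H n).subtype (N n) = LinearMap.ker f := by
    ext p
    refine ⟨fun hp => hN _ hp, fun hp => ?_⟩
    have h0 : classMap K k (p : P) = 0 := hp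
    have h1 := hgf p p.2
    rw [h0, map_zero, sub_zero] at h1
    exact h1
  rw [hker, (f.quotKerEquivOfSurjective hsurj).finrank_eq, Module.finrank_fin_fun]

/-! ### The two parities of `i` -/

lemma finrank_odd (j : ℕ) (hj : 1 ≤ j) :
    Module.finrank (ZMod 2) (↥(H (2 * (2 * j + 1))) ⧸
      Submodule.comap (H (2 * (2 * j + 1))).subtype (N (2 * (2 * j + 1)))) = j := by
  refine finrank_of_classes (fun a t => a = 4 * t + 3) j _ (fun t => 4 * t + 3) ?_ ?_ ?_ ?_
  · intro t ht
    omega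
  · intro s t _ _
    omega
  · refine classMap_eq_zero _ _ _ (fun a t h => by omega) ?_
    intro c d t ht hcd
    rcases Nat.mod_two_eq_zero_or_one c with h | h
    · rw [even_cast h, if_neg (by omega : ¬ 2 * c + 1 = 4 * t + 3)]; simp
    · rw [even_cast (a := d) (by omega), if_neg (by omega : ¬ 2 * c + 3 = 4 * t + 3)]; simp
  · intro a b ha hb hab
    have hmod : a % 2 = 0 ∨ a % 4 = 1 ∨ a % 4 = 3 := by omega
    rcases hmod with h | h | h
    · exact .inl ⟨fun t _ => by omega, mono_even_mem ha hb h (by omega) hab⟩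
    · refine .inl ⟨fun t _ => by omega, ?_⟩
      obtain ⟨s, rfl⟩ : ∃ s, a = 4 * s + 1 := ⟨a / 4, by omega⟩
      -- `x^{4s+1} y^b` is the term of `Sq²(x^{4s+1} y^{b-2})` if `b ≥ 3`, and of
      -- `Sq²(x^{4s-1} y^b)` if `b = 1`.
      by_cases hb1 : b = 1
      · subst hb1
        have := mono_odd_rel (c := 2 * s - 1) (d := 0) (n := 2 * (2 * j + 1)) (by omega)
        rw [odd_cast (a := 2 * s - 1) (by omega), Nat.cast_zero, one_smul, zero_smul, add_zero,
          show 2 * (2 * s - 1) + 3 = 4 * s + 1 by omega] at this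
        exact this
      · have := mono_odd_rel (c := 2 * s) (d := (b - 3) / 2) (n := 2 * (2 * j + 1)) (by omega)
        rw [even_cast (a := 2 * s) (by omega), odd_cast (a := (b - 3) / 2) (by omega), one_smul,
          zero_smul, zero_add, show 2 * (2 * s) + 1 = 4 * s + 1 by omega,
          show 2 * ((b - 3) / 2) + 3 = b by omega] at this
        exact this
    · refine .inr ⟨a / 4, by omega, fun s _ => by omega, ?_⟩
      rw [show 4 * (a / 4) + 3 = a by omega, show 2 * (2 * j + 1) - a = b by omega, sub_self]
      exact zero_mem _

lemma finrank_even (j : ℕ) (hj : 1 ≤ j) :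
    Module.finrank (ZMod 2) (↥(H (2 * (2 * j))) ⧸
      Submodule.comap (H (2 * (2 * j))).subtype (N (2 * (2 * j)))) = j + 1 := by
  -- Group `t` consists of the exponents `4t - 1` and `4t + 1`, of which only one is in range when
  -- `t = 0` or `t = j`; truncated subtraction is harmless as `r 0 = 1` is set separately.
  refine finrank_of_classes (fun a t => a + 1 = 4 * t ∨ a = 4 * t + 1) (j + 1) _
    (fun t => if t = 0 then 1 else 4 * t - 1) ?_ ?_ ?_ ?_
  · intro t ht
    split_ifs <;> omega
  · intro s t _ _
    split_ifs <;> omega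
  · refine classMap_eq_zero _ _ _ (fun a t h => by omega) ?_
    intro c d t ht hcd
    rcases Nat.mod_two_eq_zero_or_one c with h | h
    · rw [even_cast h, even_cast (a := d) (by omega)]; simp
    · rw [odd_cast h, odd_cast (a := d) (by omega)]
      by_cases hc : 2 * c + 2 = 4 * t
      · rw [if_pos (by omega), if_pos (by omega)]; rfl
      · rw [if_neg (by omega), if_neg (by omega)]; rfl
  · intro a b ha hb hab
    have hmod : a % 2 = 0 ∨ (a % 4 = 1 ∧ a ≠ 1) ∨ (a % 4 = 3 ∨ a = 1) := by omega
    rcases hmod with h | h | h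
    · exact .inl ⟨fun t _ => by omega, mono_even_mem ha hb h (by omega) hab⟩
    · refine .inr ⟨a / 4, by omega, fun s _ => by omega, ?_⟩
      -- The relation `e_c = e_{c+1}` with `2c + 3 = a`.
      have := mono_odd_rel (c := (a - 3) / 2) (d := (b - 1) / 2) (n := 2 * (2 * j)) (by omega)
      rw [odd_cast (a := (a - 3) / 2) (by omega), odd_cast (a := (b - 1) / 2) (by omega), one_smul,
        one_smul, show 2 * ((a - 3) / 2) + 3 = a by omega,
        show 2 * ((a - 3) / 2) + 1 = a - 2 by omega, show 2 * ((b - 1) / 2) + 1 = b by omega,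
        show 2 * ((b - 1) / 2) + 3 = b + 2 by omega] at this
      rw [if_neg (by omega), show 4 * (a / 4) - 1 = a - 2 by omega,
        show 2 * (2 * j) - (a - 2) = b + 2 by omega, CharTwo.sub_eq_add]
      exact this
    · refine .inr ⟨(a + 1) / 4, by omega, fun s _ => by omega, ?_⟩
      have hra : (if (a + 1) / 4 = 0 then 1 else 4 * ((a + 1) / 4) - 1) = a := by
        split_ifs <;> omega
      rw [hra, show 2 * (2 * j) - a = b by omega, sub_self]
      exact zero_mem _

/-- Proposition 3.5(ii): for `i ≥ 2`, the `𝔽₂`-dimension of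
`H^{2i} / (Sq¹(H^{2i-1}) + Sq²(H^{2i-2}))` is `(i-1)/2` if `i` is odd and
`1 + i/2` if `i` is even. -/
theorem stmt_9 (i : ℕ) (hi : 2 ≤ i) :
    (Odd i →
      Module.finrank (ZMod 2)
        (↥(H (2 * i)) ⧸ (Submodule.comap (H (2 * i)).subtype
          (Submodule.map Sq1 (H (2 * i - 1)) ⊔ Submodule.map Sq2 (H (2 * i - 2)))))
        = (i - 1) / 2) ∧
    (Even i →
      Module.finrank (ZMod 2)
        (↥(H (2 * i)) ⧸ (Submodule.comap (H (2 * i)).subtype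
          (Submodule.map Sq1 (H (2 * i - 1)) ⊔ Submodule.map Sq2 (H (2 * i - 2)))))
        = 1 + i / 2) := by
  refine ⟨?_, ?_⟩
  · rintro ⟨j, rfl⟩
    rw [finrank_odd j (by omega)]
    omega
  · rintro ⟨j, rfl⟩
    rw [← two_mul, finrank_even j (by omega)]
    omega
end
end

section
/- For every integer i ≥ 2, the 𝔽₂-dimension of the quotient vector space H^{2i} / ( Sq¹(H^{2i−1}) + Q₁(H^{2i−3}) ) equals i. (Since the exterior algebra 𝓔 = E(Sq¹, Q₁) is generated by Sq¹ and Q₁, this quotient is dual to Hom_𝓔(H^{2i}(ℝP^∞ ∧ ℝP^∞; ℤ/2), ℤ/2), so this is Proposition 3.5(iii) of the paper.) -/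
/-!
The dimension count rests on parity of exponents. Over `𝔽₂`, no element of the image of `Sq¹`
contains a monomial `x^a y^b` with `a` and `b` both odd, and `Sq²` preserves the space of
polynomials without such monomials; hence both `Sq¹(H^{2i-1})` and `Q₁(H^{2i-3})` lie in it
(`Sq1_mem_noOddOdd`, `Q1_mem_noOddOdd`). Conversely, a monomial of `H^{2i}` whose exponents are
not both odd has both exponents even and at least `2`, and then
`x^a y^b = Sq¹(x^{a-1} y^b)` (`monomial_mem_map_Sq1`). So the quotient is isomorphic, by reading
off coefficients, to the space on the monomials `x^{2j+1} y^{2i-2j-1}`, `0 ≤ j < i`.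
-/

noncomputable section

open MvPolynomial

/-- The polynomials in which no monomial `x^a y^b` with `a` and `b` both odd occurs. -/
def noOddOdd : Submodule (ZMod 2) P where
  carrier := {p | ∀ d : Fin 2 →₀ ℕ, Odd (d 0) → Odd (d 1) → coeff d p = 0}
  add_mem' hp hq d h0 h1 := by rw [coeff_add, hp d h0 h1, hq d h0 h1, add_zero]
  zero_mem' _ _ _ := coeff_zero _
  smul_mem' c p hp d h0 h1 := by rw [coeff_smul, hp d h0 h1, smul_zero]

lemma monomial_mem_noOddOdd {d : Fin 2 →₀ ℕ} {c : ZMod 2}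
    (h : Odd (d 0) → Odd (d 1) → c = 0) : (monomial d c : P) ∈ noOddOdd := by
  intro d' h0 h1
  rw [coeff_monomial]
  split_ifs with hd
  · subst hd
    exact h h0 h1
  · rfl

lemma natCast_eq_zero_of_even {n : ℕ} (h : Even n) : (n : ZMod 2) = 0 :=
  (ZMod.natCast_eq_zero_iff_even).2 h

lemma Sq1_monomial (d : Fin 2 →₀ ℕ) : Sq1 (monomial d 1) =
    monomial (d + Finsupp.single 0 1) (d 0 : ZMod 2)
      + monomial (d + Finsupp.single 1 1) (d 1 : ZMod 2) := by
  -- Where `d i = 0` the truncated `d - single i 1` is wrong, but its coefficient vanishes.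
  have key (i : Fin 2) : (monomial (d - Finsupp.single i 1) (d i : ZMod 2) : P) * X i ^ 2
      = monomial (d + Finsupp.single i 1) (d i : ZMod 2) := by
    rcases Nat.eq_zero_or_pos (d i) with h | h
    · simp [h]
    · rw [X_pow_eq_monomial, monomial_mul, mul_one]
      congr 2
      ext j
      simp only [Finsupp.add_apply, Finsupp.tsub_apply, Finsupp.single_apply]
      split_ifs with hij
      · subst hij; omega
      · omega
  simp only [Sq1, Derivation.coeFn_coe, mkDerivation_monomial]
  rw [Finsupp.sum_fintype _ _ (by simp), Fin.sum_univ_two]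
  simp [key]

lemma Sq2_monomial (d : Fin 2 →₀ ℕ) : Sq2 (monomial d 1) = sq2Monomial d := by
  have := (basisMonomials (Fin 2) (ZMod 2)).constr_basis (ZMod 2) sq2Monomial d
  simpa [Sq2] using this

/-- To show `T p ∈ V` it suffices to treat the monomials occurring in `p`. -/
lemma map_mem_of_support (T : P →ₗ[ZMod 2] P) (V : Submodule (ZMod 2) P) (p : P)
    (h : ∀ d ∈ p.support, T (monomial d 1) ∈ V) : T p ∈ V := by
  rw [p.as_sum, map_sum]
  refine V.sum_mem fun d hd => ?_
  have : (monomial d (coeff d p) : P) = coeff d p • monomial d 1 := by simp [smul_monomial]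
  rw [this, map_smul]
  exact V.smul_mem _ (h d hd)

lemma Sq1_mem_noOddOdd (p : P) : Sq1 p ∈ noOddOdd := by
  refine map_mem_of_support _ _ _ fun d _ => ?_
  rw [Sq1_monomial]
  refine add_mem (monomial_mem_noOddOdd fun h0 _ => ?_) (monomial_mem_noOddOdd fun _ h1 => ?_)
  · refine natCast_eq_zero_of_even ?_
    simp at h0; grind
  · refine natCast_eq_zero_of_even ?_
    simp at h1; grind

lemma Sq2_mem_noOddOdd {p : P} (hp : p ∈ noOddOdd) : Sq2 p ∈ noOddOdd := by
  refine map_mem_of_support _ _ _ fun d hd => ?_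
  have hd' : ¬ (Odd (d 0) ∧ Odd (d 1)) := fun h => (mem_support_iff.1 hd) (hp d h.1 h.2)
  rw [Sq2_monomial, sq2Monomial]
  refine add_mem (add_mem (monomial_mem_noOddOdd fun h0 h1 => ?_)
    (monomial_mem_noOddOdd fun h0 h1 => ?_)) (monomial_mem_noOddOdd fun h0 h1 => ?_)
  · simp at h0 h1; grind
  · refine natCast_eq_zero_of_even ?_
    simp at h0 h1; grind
  · simp at h0 h1; grind

lemma Q1_mem_noOddOdd (p : P) : Q1 p ∈ noOddOdd :=
  add_mem (Sq1_mem_noOddOdd _) (Sq2_mem_noOddOdd (Sq1_mem_noOddOdd _))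

lemma pos_of_mem_support {n : ℕ} {p : P} (hp : p ∈ H n) {d : Fin 2 →₀ ℕ} (hd : d ∈ p.support) :
    1 ≤ d 0 ∧ 1 ≤ d 1 ∧ d 0 + d 1 = n := by
  have hI : p ∈ Ideal.span {(X 0 * X 1 : P)} := hp.1
  have hdeg : p.IsHomogeneous n := hp.2
  have hn := hdeg (mem_support_iff.1 hd)
  obtain ⟨q, rfl⟩ := Ideal.mem_span_singleton.1 hI
  have hX : (X 0 * X 1 : P) = monomial (Finsupp.single 0 1 + Finsupp.single 1 1) 1 := by
    simp [X, monomial_mul]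
  rw [mem_support_iff, hX, coeff_monomial_mul'] at hd
  have hle : Finsupp.single 0 1 + Finsupp.single 1 1 ≤ d := by
    by_contra h
    simp [h] at hd
  have h0 := hle 0
  have h1 := hle 1
  simp [Finsupp.weight_apply, Finsupp.sum_fintype] at h0 h1 hn
  exact ⟨h0, h1, hn⟩

lemma monomial_mem_H {n : ℕ} {d : Fin 2 →₀ ℕ} (c : ZMod 2) (h0 : 1 ≤ d 0) (h1 : 1 ≤ d 1)
    (hn : d 0 + d 1 = n) : (monomial d c : P) ∈ H n := by
  refine ⟨Ideal.mem_span_singleton.2 ⟨monomial (d - (Finsupp.single 0 1 + Finsupp.single 1 1)) c,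
    ?_⟩, ?_⟩
  · have hX : (X 0 * X 1 : P) = monomial (Finsupp.single 0 1 + Finsupp.single 1 1) 1 := by
      simp [X, monomial_mul]
    rw [hX, monomial_mul, one_mul, add_tsub_cancel_of_le]
    intro j
    fin_cases j <;> simpa
  · refine isHomogeneous_monomial _ ?_
    rw [Finsupp.degree_eq_sum, Fin.sum_univ_two, hn]

/-- A monomial with both exponents even and positive is `Sq¹(x^{a-1} y^b)`. -/
lemma monomial_mem_map_Sq1 {n : ℕ} {d : Fin 2 →₀ ℕ} (h0 : 1 ≤ d 0) (h1 : 1 ≤ d 1)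
    (e0 : Even (d 0)) (e1 : Even (d 1)) (hn : d 0 + d 1 = n) :
    (monomial d 1 : P) ∈ Submodule.map Sq1 (H (n - 1)) := by
  have hd : d - Finsupp.single 0 1 + Finsupp.single 0 1 = d := by
    refine tsub_add_cancel_of_le fun j => ?_
    fin_cases j <;> simp [h0]
  have hodd : ((d 0 - 1 : ℕ) : ZMod 2) = 1 := by
    rw [ZMod.natCast_eq_one_iff_odd]
    grind
  refine ⟨monomial (d - Finsupp.single 0 1) 1, monomial_mem_H _ ?_ ?_ ?_, ?_⟩
  · simp; grind
  · simpa using h1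
  · simp; omega
  · rw [Sq1_monomial, hd]
    simp [hodd, natCast_eq_zero_of_even e1]

/-- The exponent of `x^{2j+1} y^{2i-2j-1}`. -/
def oddExp (i j : ℕ) : Fin 2 →₀ ℕ :=
  Finsupp.single 0 (2 * j + 1) + Finsupp.single 1 (2 * i - 2 * j - 1)

@[simp] lemma oddExp_zero (i j : ℕ) : oddExp i j 0 = 2 * j + 1 := by simp [oddExp]

@[simp] lemma oddExp_one (i j : ℕ) : oddExp i j 1 = 2 * i - 2 * j - 1 := by simp [oddExp]

/-- The coefficients of an element of `H^{2i}` at the monomials `x^{2j+1} y^{2i-2j-1}`, `j < i`. -/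
def oddCoeffs (i : ℕ) : ↥(H (2 * i)) →ₗ[ZMod 2] (Fin i → ZMod 2) :=
  LinearMap.pi fun j => lcoeff (ZMod 2) (oddExp i j) ∘ₗ (H (2 * i)).subtype

lemma oddCoeffs_apply (i : ℕ) (p : ↥(H (2 * i))) (j : Fin i) :
    oddCoeffs i p j = coeff (oddExp i j) (p : P) := rfl

lemma oddCoeffs_surjective (i : ℕ) : Function.Surjective (oddCoeffs i) := by
  intro v
  refine ⟨⟨∑ j : Fin i, monomial (oddExp i j) (v j), Submodule.sum_mem _ fun j _ => ?_⟩, ?_⟩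
  · have := j.2
    refine monomial_mem_H _ ?_ ?_ ?_ <;> simp <;> omega
  · ext k
    rw [oddCoeffs_apply, coeff_sum, Finset.sum_eq_single k]
    · simp
    · intro j _ hjk
      rw [coeff_monomial, if_neg]
      intro h
      have := DFunLike.congr_fun h 0
      simp at this
      exact hjk (Fin.ext this)
    · simp

lemma ker_oddCoeffs (i : ℕ) : LinearMap.ker (oddCoeffs i) =
    Submodule.comap (H (2 * i)).subtype
      (Submodule.map Sq1 (H (2 * i - 1)) ⊔ Submodule.map Q1 (H (2 * i - 3))) := by
  refine le_antisymm ?_ ?_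
  · rintro ⟨p, hp⟩ hker
    refine Submodule.mem_sup_left ?_
    refine map_mem_of_support LinearMap.id _ p fun d hd => ?_
    obtain ⟨h0, h1, hn⟩ := pos_of_mem_support hp hd
    have hodd : ¬ Odd (d 0) := by
      rintro ⟨j, hj⟩
      have hji : j < i := by omega
      have hdj : oddExp i j = d := by
        ext k
        fin_cases k
        · simp [hj]
        · simp; omega
      have := congrFun (LinearMap.mem_ker.1 hker) ⟨j, hji⟩
      rw [oddCoeffs_apply] at this
      simp only [hdj] at this
      exact (mem_support_iff.1 hd) this
    exact monomial_mem_map_Sq1 h0 h1 (by grind) (by grind) hn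
  · have hle : Submodule.map Sq1 (H (2 * i - 1)) ⊔ Submodule.map Q1 (H (2 * i - 3)) ≤ noOddOdd := by
      refine sup_le ?_ ?_ <;> rintro _ ⟨q, _, rfl⟩
      · exact Sq1_mem_noOddOdd q
      · exact Q1_mem_noOddOdd q
    intro p hp
    rw [LinearMap.mem_ker]
    ext j
    have := j.2
    refine hle hp _ ?_ ?_
    · simp
    · rw [oddExp_one]; grind

/-- Proposition 3.5(iii): for `i ≥ 2`, the `𝔽₂`-dimension of
`H^{2i} / (Sq¹(H^{2i-1}) + Q₁(H^{2i-3}))` equals `i`. -/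
theorem stmt_10 (i : ℕ) (hi : 2 ≤ i) :
    Module.finrank (ZMod 2)
      (↥(H (2 * i)) ⧸ (Submodule.comap (H (2 * i)).subtype
        (Submodule.map Sq1 (H (2 * i - 1)) ⊔ Submodule.map Q1 (H (2 * i - 3)))))
      = i := by
  rw [← ker_oddCoeffs, ((oddCoeffs i).quotKerEquivOfSurjective (oddCoeffs_surjective i)).finrank_eq,
    Module.finrank_fin_fun]
end
end
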